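/- If (T, f) solves the Duffing boundary value problem for (m, β), then ∫_{-T}^{T} f(t)³ dt = 2√2 · β · arcsin(k) + 2m, where k = √((1 + β/√(2m² + β²))/2). -/

import Mathlib

/-!
The vector `z = (f² - β) + √2 f' i` satisfies `z' = -√2 f i · z`, so it rotates clockwise at angular
speed `√2 f`. It starts at a point with real part `-β` in the upper half plane, with argument
`φ = 2 arcsin k`, and `f = 0` exactly when its real part is back to `-β`. As `f > 0` inside the
interval, the first time this happens is the right end point, where `z` has turned by `2φ` to its
mirror image. Hence `√2 ∫ f = 2φ` and `f'` has changed sign; integrating `f³ = β f - f''` finishes.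
-/

open Real

/-- The Duffing boundary value problem for `(m, β)`: a time `T > 0` and a `C^∞` function
`f` with `f'' = -f³ + β·f` on `[-T, T]`, boundary values `f(±T) = 0`,
`f'(-T) = m`, `f'(T) = -m`, and `f > 0` on `(-T, T)`. -/
def IsDuffingSolution (m : ℕ) (β T : ℝ) (f : ℝ → ℝ) : Prop :=
  0 < T ∧ ContDiff ℝ (⊤ : ℕ∞) f ∧
    (∀ t ∈ Set.Icc (-T) T, deriv (deriv f) t = -(f t) ^ 3 + β * f t) ∧
    f (-T) = 0 ∧ f T = 0 ∧ deriv f (-T) = (m : ℝ) ∧ deriv f T = -(m : ℝ) ∧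
    (∀ t ∈ Set.Ioo (-T) T, 0 < f t)


/-- The elliptic modulus `k = √((1 + β/√(2m² + β²))/2)` associated to `(m, β)`. -/
noncomputable def duffingModulus (m : ℕ) (β : ℝ) : ℝ :=
  Real.sqrt ((1 + β / Real.sqrt (2 * (m : ℝ) ^ 2 + β ^ 2)) / 2)

lemma eq_mul_exp_integral_of_hasDerivAt {a b t : ℝ} {z c : ℝ → ℂ}
    (hz : ContinuousOn z (Set.Icc a b)) (hc : ContinuousOn c (Set.Icc a b))
    (hz' : ∀ s ∈ Set.Ioo a b, HasDerivAt z (c s * z s) s) (ht : t ∈ Set.Icc a b) :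
    z t = z a * Complex.exp (∫ s in a..t, c s) := by
  set C : ℝ → ℂ := fun u => ∫ s in a..u, c s
  have hab : a ≤ b := ht.1.trans ht.2
  have hint : ∀ s ∈ Set.Icc a b, IntervalIntegrable c MeasureTheory.volume a s := fun s hs =>
    (hc.mono (Set.Icc_subset_Icc_right hs.2)).intervalIntegrable_of_Icc hs.1
  have hCcont : ContinuousOn C (Set.Icc a b) := by
    rw [← Set.uIcc_of_le hab]
    exact intervalIntegral.continuousOn_primitive_interval' (hint b ⟨hab, le_rfl⟩)
      Set.left_mem_uIcc
  have hC : ∀ s ∈ Set.Ioo a b, HasDerivAt C (c s) s := fun s hs =>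
    intervalIntegral.integral_hasDerivAt_right (hint s (Set.Ioo_subset_Icc_self hs))
      ((hc.mono Set.Ioo_subset_Icc_self).stronglyMeasurableAtFilter isOpen_Ioo s hs)
      (hc.continuousAt (Icc_mem_nhds hs.1 hs.2))
  have hderiv : ∀ s ∈ Set.Ioo a t, HasDerivAt (fun u => z u * Complex.exp (-C u)) 0 s := by
    intro s hs
    have hs' : s ∈ Set.Ioo a b := ⟨hs.1, hs.2.trans_le ht.2⟩
    refine ((hz' s hs').mul (hC s hs').neg.cexp).congr_deriv ?_
    ring
  have hcont : ContinuousOn (fun u => z u * Complex.exp (-C u)) (Set.Icc a t) :=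
    (hz.mul hCcont.neg.cexp).mono (Set.Icc_subset_Icc_right ht.2)
  have hconst := intervalIntegral.integral_eq_sub_of_hasDerivAt_of_le ht.1 hcont hderiv
    intervalIntegrable_const
  have hCa : C a = 0 := intervalIntegral.integral_same
  rw [intervalIntegral.integral_zero, hCa, neg_zero, Complex.exp_zero, mul_one, eq_comm,
    sub_eq_zero, Complex.exp_neg] at hconst
  rw [← hconst, inv_mul_cancel_right₀ (Complex.exp_ne_zero _)]

lemma arcsin_sqrt_half_one_sub_re_div_norm {z : ℂ} (hz : z ≠ 0) :
    arcsin √((1 - z.re / ‖z‖) / 2) = |z.arg| / 2 := by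
  have hπ := z.abs_arg_le_pi
  have h0 := abs_nonneg z.arg
  rw [← Complex.cos_arg hz, ← cos_abs z.arg, ← sin_half_eq_sqrt h0 (by linarith),
    arcsin_sin (by linarith) (by linarith)]

lemma arg_pos_of_im_pos {z : ℂ} (hz : 0 < z.im) : 0 < z.arg :=
  (Complex.arg_nonneg_iff.2 hz.le).lt_of_ne' fun h => hz.ne' (Complex.arg_eq_zero_iff.1 h).2

lemma eq_two_mul_of_first_cos_sub_eq {a b φ : ℝ} {G : ℝ → ℝ} (hab : a ≤ b) (hφ : φ ∈ Set.Ioc 0 π)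
    (hG : ContinuousOn G (Set.Icc a b)) (hGa : G a = 0) (hGb : 0 < G b)
    (hne : ∀ t ∈ Set.Ioo a b, cos (φ - G t) ≠ cos φ) (heq : cos (φ - G b) = cos φ) :
    G b = 2 * φ := by
  -- `cos (φ - 2 * φ) = cos φ`, so `G` cannot pass `2 * φ` in the interior.
  have hle : G b ≤ 2 * φ := by
    by_contra! hlt
    obtain ⟨t, ht, hGt⟩ := intermediate_value_Ioo hab hG
      (⟨by linarith [hφ.1], hlt⟩ : 2 * φ ∈ Set.Ioo (G a) (G b))
    refine hne t ht ?_
    rw [hGt, ← cos_neg]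
    congr 1
    ring
  have habs : |φ - G b| ≤ φ := abs_le.2 ⟨by linarith, by linarith⟩
  have hfold : |φ - G b| = φ :=
    injOn_cos ⟨abs_nonneg _, habs.trans hφ.2⟩ ⟨hφ.1.le, hφ.2⟩ (by rw [cos_abs, heq])
  rcases abs_cases (φ - G b) with h | h <;> linarith

/-- `f` solves the Duffing equation `f'' = -f³ + β f` on `[a, b]`, in first-order form with
velocity `v = f'`; derivatives are only required in the interior, so they are two-sided. -/
structure IsDuffingSolutionOn (β a b : ℝ) (f v : ℝ → ℝ) : Prop where
  continuousOn : ContinuousOn f (Set.Icc a b)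
  continuousOn_velocity : ContinuousOn v (Set.Icc a b)
  hasDerivAt : ∀ t ∈ Set.Ioo a b, HasDerivAt f (v t) t
  hasDerivAt_velocity : ∀ t ∈ Set.Ioo a b, HasDerivAt v (-f t ^ 3 + β * f t) t

/-- The vector `(f² - β) + √2 v i`, whose squared norm is, up to constants, the energy
`v² / 2 + f⁴ / 4 - β f² / 2` of the Duffing oscillator and whose argument serves as its phase. -/
noncomputable def duffingPhaseVector (β : ℝ) (f v : ℝ → ℝ) (t : ℝ) : ℂ :=
  (f t ^ 2 - β : ℝ) + (√2 * v t : ℝ) * Complex.I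

section PhaseVector

variable {β t : ℝ} {f v : ℝ → ℝ}

lemma duffingPhaseVector_re : (duffingPhaseVector β f v t).re = f t ^ 2 - β := by
  simp [duffingPhaseVector, -Complex.ofReal_sub]

lemma duffingPhaseVector_im : (duffingPhaseVector β f v t).im = √2 * v t := by
  simp [duffingPhaseVector, -Complex.ofReal_sub]

lemma duffingPhaseVector_im_pos (hv : 0 < v t) : 0 < (duffingPhaseVector β f v t).im := by
  rw [duffingPhaseVector_im]
  exact mul_pos (sqrt_pos.2 two_pos) hv

lemma duffingPhaseVector_ne_zero (hv : 0 < v t) : duffingPhaseVector β f v t ≠ 0 :=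
  fun h => (duffingPhaseVector_im_pos hv).ne' (congrArg Complex.im h)

lemma duffingPhaseVector_re_of_eq_zero (hf : f t = 0) :
    (duffingPhaseVector β f v t).re = -β := by
  rw [duffingPhaseVector_re, hf, zero_pow two_ne_zero, zero_sub]

lemma norm_duffingPhaseVector_of_eq_zero (hf : f t = 0) :
    ‖duffingPhaseVector β f v t‖ = √(2 * v t ^ 2 + β ^ 2) := by
  rw [Complex.norm_def, Complex.normSq_apply, duffingPhaseVector_re_of_eq_zero hf,
    duffingPhaseVector_im]
  congr 1
  linear_combination v t ^ 2 * mul_self_sqrt (zero_le_two (α := ℝ))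

lemma arg_duffingPhaseVector_of_eq_zero (hf : f t = 0) (hv : 0 < v t) :
    (duffingPhaseVector β f v t).arg = 2 * arcsin √((1 + β / √(2 * v t ^ 2 + β ^ 2)) / 2) := by
  have harcsin := arcsin_sqrt_half_one_sub_re_div_norm
    (duffingPhaseVector_ne_zero (β := β) (f := f) hv)
  rw [abs_of_pos (arg_pos_of_im_pos (duffingPhaseVector_im_pos hv)),
    duffingPhaseVector_re_of_eq_zero hf, neg_div, sub_neg_eq_add,
    norm_duffingPhaseVector_of_eq_zero hf] at harcsin
  rw [harcsin]
  ring

end PhaseVector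

namespace IsDuffingSolutionOn

variable {β a b t : ℝ} {f v : ℝ → ℝ}

lemma intervalIntegrable (h : IsDuffingSolutionOn β a b f v) (hab : a ≤ b) :
    IntervalIntegrable f MeasureTheory.volume a b :=
  h.continuousOn.intervalIntegrable_of_Icc hab

lemma integral_cube (h : IsDuffingSolutionOn β a b f v) (hab : a ≤ b) :
    ∫ t in a..b, f t ^ 3 = β * (∫ t in a..b, f t) - (v b - v a) := by
  have hcube : IntervalIntegrable (fun t => -f t ^ 3) MeasureTheory.volume a b :=
    (h.continuousOn.pow 3).neg.intervalIntegrable_of_Icc hab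
  have hlin := (h.intervalIntegrable hab).const_mul β
  have hvel : ∫ t in a..b, (-f t ^ 3 + β * f t) = v b - v a :=
    intervalIntegral.integral_eq_sub_of_hasDerivAt_of_le hab h.continuousOn_velocity
      h.hasDerivAt_velocity (hcube.add hlin)
  rw [intervalIntegral.integral_add hcube hlin, intervalIntegral.integral_neg,
    intervalIntegral.integral_const_mul] at hvel
  linear_combination -hvel

lemma continuousOn_phaseVector (h : IsDuffingSolutionOn β a b f v) :
    ContinuousOn (duffingPhaseVector β f v) (Set.Icc a b) := by
  have hre : ContinuousOn (fun t => f t ^ 2 - β) (Set.Icc a b) :=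
    (h.continuousOn.pow 2).sub continuousOn_const
  have him : ContinuousOn (fun t => √2 * v t) (Set.Icc a b) :=
    continuousOn_const.mul h.continuousOn_velocity
  exact (Complex.continuous_ofReal.comp_continuousOn hre).add
    ((Complex.continuous_ofReal.comp_continuousOn him).mul continuousOn_const)

lemma hasDerivAt_phaseVector (h : IsDuffingSolutionOn β a b f v) (ht : t ∈ Set.Ioo a b) :
    HasDerivAt (duffingPhaseVector β f v)
      (-((√2 * f t : ℝ) * Complex.I) * duffingPhaseVector β f v t) t := by
  have hre : HasDerivAt (fun s => f s ^ 2 - β) (√2 * f t * (√2 * v t)) t := by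
    refine (((h.hasDerivAt t ht).pow 2).sub_const β).congr_deriv ?_
    linear_combination -(f t * v t) * mul_self_sqrt (zero_le_two (α := ℝ))
  have him : HasDerivAt (fun s => √2 * v s) (-(√2 * f t) * (f t ^ 2 - β)) t := by
    refine ((h.hasDerivAt_velocity t ht).const_mul √2).congr_deriv ?_
    ring
  refine (hre.ofReal_comp.add (him.ofReal_comp.mul_const Complex.I)).congr_deriv ?_
  rw [duffingPhaseVector]
  push_cast
  linear_combination (√2 * f t * (√2 * v t) : ℂ) * Complex.I_mul_I

lemma phaseVector_eq_norm_mul_exp (h : IsDuffingSolutionOn β a b f v) (ht : t ∈ Set.Icc a b) :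
    duffingPhaseVector β f v t = ‖duffingPhaseVector β f v a‖ *
      Complex.exp (((duffingPhaseVector β f v a).arg - √2 * ∫ s in a..t, f s : ℝ) * Complex.I) := by
  have hspeed : ContinuousOn (fun s => -((√2 * f s : ℝ) * Complex.I)) (Set.Icc a b) :=
    ((Complex.continuous_ofReal.comp_continuousOn (h.continuousOn.const_mul √2)).mul
      continuousOn_const).neg
  rw [eq_mul_exp_integral_of_hasDerivAt h.continuousOn_phaseVector hspeed
    (fun _ => h.hasDerivAt_phaseVector) ht, intervalIntegral.integral_neg,
    intervalIntegral.integral_mul_const, intervalIntegral.integral_ofReal,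
    intervalIntegral.integral_const_mul]
  nth_rw 1 [← (duffingPhaseVector β f v a).norm_mul_exp_arg_mul_I]
  rw [mul_assoc, ← Complex.exp_add, Complex.ofReal_sub, sub_mul, sub_eq_add_neg]

lemma sq_sub_eq_norm_mul_cos (h : IsDuffingSolutionOn β a b f v) (ht : t ∈ Set.Icc a b) :
    f t ^ 2 - β = ‖duffingPhaseVector β f v a‖ *
      cos ((duffingPhaseVector β f v a).arg - √2 * ∫ s in a..t, f s) := by
  have hre := congrArg Complex.re (h.phaseVector_eq_norm_mul_exp ht)
  rwa [duffingPhaseVector_re, Complex.re_ofReal_mul, Complex.exp_ofReal_mul_I_re] at hre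

lemma sqrt_two_mul_velocity_eq_norm_mul_sin (h : IsDuffingSolutionOn β a b f v)
    (ht : t ∈ Set.Icc a b) :
    √2 * v t = ‖duffingPhaseVector β f v a‖ *
      sin ((duffingPhaseVector β f v a).arg - √2 * ∫ s in a..t, f s) := by
  have him := congrArg Complex.im (h.phaseVector_eq_norm_mul_exp ht)
  rwa [duffingPhaseVector_im, Complex.im_ofReal_mul, Complex.exp_ofReal_mul_I_im] at him

end IsDuffingSolutionOn

/-- A solution of the Duffing equation that leaves `0` at time `a` with positive velocity, stays
positive on `(a, b)` and returns to `0` at time `b`. -/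
structure IsDuffingArch (β a b : ℝ) (f v : ℝ → ℝ) : Prop extends
    IsDuffingSolutionOn β a b f v where
  lt : a < b
  eq_zero_left : f a = 0
  eq_zero_right : f b = 0
  pos : ∀ t ∈ Set.Ioo a b, 0 < f t
  velocity_left_pos : 0 < v a

namespace IsDuffingArch

variable {β a b : ℝ} {f v : ℝ → ℝ}

lemma arg_phaseVector_left_pos (h : IsDuffingArch β a b f v) :
    0 < (duffingPhaseVector β f v a).arg :=
  arg_pos_of_im_pos (duffingPhaseVector_im_pos h.velocity_left_pos)

lemma sqrt_two_mul_integral (h : IsDuffingArch β a b f v) :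
    √2 * ∫ t in a..b, f t = 2 * (duffingPhaseVector β f v a).arg := by
  have hcos : ∀ t ∈ Set.Icc a b, cos ((duffingPhaseVector β f v a).arg - √2 * ∫ s in a..t, f s) =
      cos (duffingPhaseVector β f v a).arg ↔ f t = 0 := by
    intro t ht
    have hnorm := norm_ne_zero_iff.2 (duffingPhaseVector_ne_zero (β := β) (f := f)
      h.velocity_left_pos)
    rw [← mul_right_inj' hnorm, ← h.sq_sub_eq_norm_mul_cos ht, Complex.norm_mul_cos_arg,
      duffingPhaseVector_re_of_eq_zero h.eq_zero_left, sub_eq_neg_self, sq_eq_zero_iff]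
  have hcont : ContinuousOn (fun t => √2 * ∫ s in a..t, f s) (Set.Icc a b) := by
    rw [← Set.uIcc_of_le h.lt.le]
    exact (intervalIntegral.continuousOn_primitive_interval' (h.intervalIntegrable h.lt.le)
      Set.left_mem_uIcc).const_mul √2
  have hpos : 0 < √2 * ∫ t in a..b, f t := mul_pos (sqrt_pos.2 two_pos)
    (intervalIntegral.intervalIntegral_pos_of_pos_on (h.intervalIntegrable h.lt.le) h.pos h.lt)
  exact eq_two_mul_of_first_cos_sub_eq (G := fun t => √2 * ∫ s in a..t, f s) h.lt.le
    ⟨h.arg_phaseVector_left_pos, Complex.arg_le_pi _⟩ hcont (by simp) hpos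
    (fun t ht => mt (hcos t (Set.Ioo_subset_Icc_self ht)).1 (h.pos t ht).ne')
    ((hcos b (Set.right_mem_Icc.2 h.lt.le)).2 h.eq_zero_right)

lemma velocity_right (h : IsDuffingArch β a b f v) : v b = -v a := by
  have hb := h.sqrt_two_mul_velocity_eq_norm_mul_sin (Set.right_mem_Icc.2 h.lt.le)
  rw [h.sqrt_two_mul_integral, two_mul, sub_add_cancel_left, sin_neg, mul_neg,
    Complex.norm_mul_sin_arg, duffingPhaseVector_im, ← mul_neg] at hb
  exact mul_left_cancel₀ (sqrt_pos.2 two_pos).ne' hb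

lemma integral_eq_arcsin (h : IsDuffingArch β a b f v) :
    ∫ t in a..b, f t = 2 * √2 * arcsin √((1 + β / √(2 * v a ^ 2 + β ^ 2)) / 2) := by
  have hint := h.sqrt_two_mul_integral
  rw [arg_duffingPhaseVector_of_eq_zero h.eq_zero_left h.velocity_left_pos] at hint
  linear_combination √2 / 2 * hint -
    (∫ t in a..b, f t) / 2 * mul_self_sqrt (zero_le_two (α := ℝ))

end IsDuffingArch

lemma IsDuffingSolution.isDuffingArch {m : ℕ} {β T : ℝ} {f : ℝ → ℝ}
    (h : IsDuffingSolution m β T f) (hm : 0 < m) : IsDuffingArch β (-T) T f (deriv f) := by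
  obtain ⟨hT, hf, hode, hleft, hright, hvel, -, hpos⟩ := h
  have hf' : ContDiff ℝ (⊤ : ℕ∞) (deriv f) := (contDiff_infty_iff_deriv.1 hf).2
  exact
    { continuousOn := hf.continuous.continuousOn
      continuousOn_velocity := hf'.continuous.continuousOn
      hasDerivAt := fun t _ => (hf.differentiable (by simp) t).hasDerivAt
      hasDerivAt_velocity := fun t ht => by
        rw [← hode t (Set.Ioo_subset_Icc_self ht)]
        exact (hf'.differentiable (by simp) t).hasDerivAt
      lt := neg_lt_self hT
      eq_zero_left := hleft
      eq_zero_right := hright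
      pos := hpos
      velocity_left_pos := hvel ▸ Nat.cast_pos.2 hm }

theorem duffing_integral_f_cubed_general {β a b : ℝ} {f v : ℝ → ℝ} (h : IsDuffingArch β a b f v) :
    ∫ t in a..b, f t ^ 3 =
      2 * √2 * β * arcsin √((1 + β / √(2 * v a ^ 2 + β ^ 2)) / 2) + 2 * v a := by
  rw [h.integral_cube h.lt.le, h.integral_eq_arcsin, h.velocity_right]
  ring

/-- `∫_{-T}^{T} f³ = 2√2 · β · arcsin k + 2m`. -/
theorem duffing_integral_f_cubed (m : ℕ) (hm : 0 < m) (β T : ℝ) (f : ℝ → ℝ)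
    (h : IsDuffingSolution m β T f) :
    (∫ t in (-T)..T, (f t) ^ 3)
      = 2 * Real.sqrt 2 * β * Real.arcsin (duffingModulus m β) + 2 * (m : ℝ) := by
  have ⟨_, _, _, _, _, hvel, _⟩ := h
  rw [duffing_integral_f_cubed_general (h.isDuffingArch hm), hvel, duffingModulus]
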